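/- Let Σ be a J × J real symmetric positive definite matrix, let μ > 0, and define S : ℝ^J → ℝ by S(m) = inf_{t ∈ ℝ^J_−} ⟨m − t, Σ^{-1}(m − t)⟩. Then for every m ∈ ℝ^J, the infimal convolution inf_{m' ∈ ℝ^J} [S(m') + (1/(2μ))⟨m − m', Σ^{-1}(m − m')⟩] equals the dual expression sup_{u ∈ ℝ^J_+} [⟨m, u⟩ − ((1 + 2μ)/4)⟨u, Σ u⟩]. -/

import Mathlib

open Matrix MatrixOrder in
lemma proj_aux {J : ℕ} (P : Matrix (Fin J) (Fin J) ℝ) (hP : P.PosDef) (m : Fin J → ℝ) :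
    ∃ t : Fin J → ℝ, (∀ j, t j ≤ 0) ∧ ∀ s : Fin J → ℝ, (∀ j, s j ≤ 0) →
      (s - t) ⬝ᵥ (P *ᵥ (m - t)) ≤ 0 := by
  obtain ⟨B, hB⟩ : ∃ B : Matrix (Fin J) (Fin J) ℝ, P = Bᴴ * B := by
    obtain ⟨y, _, hy⟩ := CStarAlgebra.isStrictlyPositive_iff_eq_star_mul_self.mp
      hP.isStrictlyPositive
    exact ⟨y, hy⟩
  have hBu : IsUnit B.det := by
    have h := hP.det_pos
    rw [hB, det_mul] at h
    exact isUnit_iff_ne_zero.2 (fun h0 => by simp [h0] at h)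
  let L : (Fin J → ℝ) → EuclideanSpace ℝ (Fin J) := fun x => WithLp.toLp 2 (B *ᵥ x)
  let K : Set (EuclideanSpace ℝ (Fin J)) := {y | ∀ j, (B⁻¹ *ᵥ (WithLp.ofLp y)) j ≤ 0}
  have hLK : ∀ x : Fin J → ℝ, (∀ j, x j ≤ 0) → L x ∈ K := by
    intro x hx j
    simpa [L, mulVec_mulVec, nonsing_inv_mul _ hBu] using hx j
  have hclosed : IsClosed K := by
    simp only [K, Set.ofPred_forall]
    refine isClosed_iInter fun j => isClosed_le ?_ continuous_const
    have : Continuous fun y : EuclideanSpace ℝ (Fin J) => B⁻¹ *ᵥ (WithLp.ofLp y) :=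
      Continuous.matrix_mulVec continuous_const (PiLp.continuous_ofLp 2 _)
    exact (continuous_apply j).comp this
  have hconv : Convex ℝ K := by
    intro x hx y hy a b ha hb _ j
    have h1 := mul_nonneg_of_nonpos_of_nonpos (neg_nonpos.2 ha) (hx j)
    have h2 := mul_nonneg_of_nonpos_of_nonpos (neg_nonpos.2 hb) (hy j)
    simp only [WithLp.ofLp_add, WithLp.ofLp_smul, mulVec_add, mulVec_smul, Pi.add_apply,
      Pi.smul_apply, smul_eq_mul]
    linarith
  obtain ⟨v, hv, hmin⟩ := exists_norm_eq_iInf_of_complete_convex ⟨L 0, hLK 0 (by simp)⟩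
    hclosed.isComplete hconv (L m)
  rw [norm_eq_iInf_iff_real_inner_le_zero hconv hv] at hmin
  refine ⟨B⁻¹ *ᵥ (WithLp.ofLp v), hv, fun s hs => ?_⟩
  have h := hmin (L s) (hLK s hs)
  have hv' : WithLp.ofLp v = B *ᵥ (B⁻¹ *ᵥ (WithLp.ofLp v)) := by
    simp [mulVec_mulVec, mul_nonsing_inv _ hBu]
  simp only [EuclideanSpace.inner_eq_star_dotProduct, L, WithLp.ofLp_sub, star_trivial] at h
  rw [hv', ← mulVec_sub, ← mulVec_sub] at h
  rw [hB, ← mulVec_mulVec, dotProduct_mulVec, conjTranspose_eq_transpose_of_trivial,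
    vecMul_transpose]
  exact h


open Matrix in
/-- Dual formula for the μ-smooth approximation of the quadratic-programming index
function by infimal convolution: for every `m`,
`inf_{m'} [S(m') + (1/(2μ))⟨m−m', Σ⁻¹(m−m')⟩] = sup_{u ≥ 0} [⟨m, u⟩ − ((1+2μ)/4)⟨u, Σu⟩]`. -/
theorem inf_convolution_dual_formula (J : ℕ) (Sig : Matrix (Fin J) (Fin J) ℝ) (hSig : Sig.PosDef)
    (μ : ℝ) (hμ : 0 < μ)
    (S : (Fin J → ℝ) → ℝ)
    (hS : ∀ m, S m = sInf {y : ℝ | ∃ t : Fin J → ℝ, (∀ j, t j ≤ 0) ∧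
      y = (m - t) ⬝ᵥ (Sig⁻¹ *ᵥ (m - t))})
    (m : Fin J → ℝ) :
    sInf (Set.range fun m' : Fin J → ℝ =>
        S m' + (1 / (2 * μ)) * ((m - m') ⬝ᵥ (Sig⁻¹ *ᵥ (m - m'))))
      = sSup {y : ℝ | ∃ u : Fin J → ℝ, (∀ j, 0 ≤ u j) ∧
          y = m ⬝ᵥ u - ((1 + 2 * μ) / 4) * (u ⬝ᵥ (Sig *ᵥ u))} := by
  have hP : (Sig⁻¹).PosDef := hSig.inv
  have hdet : IsUnit Sig.det := isUnit_iff_ne_zero.2 hSig.det_pos.ne'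
  have hPS : ∀ u, Sig⁻¹ *ᵥ (Sig *ᵥ u) = u := fun u => by
    simp [mulVec_mulVec, nonsing_inv_mul _ hdet]
  have hSP : ∀ u, Sig *ᵥ (Sig⁻¹ *ᵥ u) = u := fun u => by
    simp [mulVec_mulVec, mul_nonsing_inv _ hdet]
  have hsym : ∀ x y, x ⬝ᵥ (Sig⁻¹ *ᵥ y) = y ⬝ᵥ (Sig⁻¹ *ᵥ x) := fun x y => by
    have h : (Sig⁻¹)ᵀ = Sig⁻¹ := by
      have := hP.isHermitian.eq
      rwa [conjTranspose_eq_transpose_of_trivial] at this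
    rw [dotProduct_mulVec, ← mulVec_transpose, h, dotProduct_comm]
  have hnn : ∀ x, 0 ≤ x ⬝ᵥ (Sig⁻¹ *ᵥ x) := fun x => by
    simpa using hP.posSemidef.dotProduct_mulVec_nonneg x
  generalize Sig⁻¹ = P at *
  have key : ∀ (s : ℝ) (x u : Fin J → ℝ),
      0 ≤ x ⬝ᵥ (P *ᵥ x) - 2 * s * (x ⬝ᵥ u) + s ^ 2 * (u ⬝ᵥ (Sig *ᵥ u)) := by
    intro s x u
    have h := hnn (x - s • (Sig *ᵥ u))
    have h2 := hsym (Sig *ᵥ u) x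
    simp only [mulVec_sub, mulVec_smul, hPS, dotProduct_sub, sub_dotProduct, smul_dotProduct,
      dotProduct_smul, smul_eq_mul] at h h2
    rw [h2, dotProduct_comm (Sig *ᵥ u) u] at h
    linarith
  have weak : ∀ m' t u : Fin J → ℝ, (∀ j, t j ≤ 0) → (∀ j, 0 ≤ u j) →
      m ⬝ᵥ u - ((1 + 2 * μ) / 4) * (u ⬝ᵥ (Sig *ᵥ u)) ≤
      (m' - t) ⬝ᵥ (P *ᵥ (m' - t)) + (1 / (2 * μ)) * ((m - m') ⬝ᵥ (P *ᵥ (m - m'))) := by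
    intro m' t u ht hu
    have h1 := key (1/2) (m' - t) u
    have h2 := mul_nonneg (by positivity : 0 ≤ 1 / (2 * μ)) (key μ (m - m') u)
    have h3 : t ⬝ᵥ u ≤ 0 := Finset.sum_nonpos fun j _ =>
      mul_nonpos_of_nonpos_of_nonneg (ht j) (hu j)
    have h4 : 1 / (2 * μ) * ((m - m') ⬝ᵥ (P *ᵥ (m - m')) - 2 * μ * ((m - m') ⬝ᵥ u)
        + μ ^ 2 * (u ⬝ᵥ (Sig *ᵥ u))) = 1 / (2 * μ) * ((m - m') ⬝ᵥ (P *ᵥ (m - m')))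
        - (m - m') ⬝ᵥ u + μ / 2 * (u ⬝ᵥ (Sig *ᵥ u)) := by
      field_simp
    rw [h4] at h2
    rw [sub_dotProduct _ _ u] at h1 h2
    linarith
  obtain ⟨t, ht, hvar⟩ := proj_aux P hP m
  set d := m - t with hd
  have hv : ∀ j, 0 ≤ (P *ᵥ d) j := by
    intro j
    have h := hvar (t - Pi.single j 1) (fun i => by
      have := ht i
      have h1 : (0:ℝ) ≤ (Pi.single j 1 : Fin J → ℝ) i := by
        by_cases hij : i = j
        · subst hij; simp
        · simp [hij]
      simp only [Pi.sub_apply]; linarith)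
    simpa using h
  have htv : t ⬝ᵥ (P *ᵥ d) = 0 := by
    have h1 := hvar 0 (by simp)
    have h2 := hvar (t + t) (fun j => by have := ht j; simp only [Pi.add_apply]; linarith)
    simp only [zero_sub, neg_dotProduct, add_sub_cancel_right] at h1 h2
    linarith
  have ha : 0 < 1 + 2 * μ := by positivity
  set a := 1 + 2 * μ with hadef
  set V := (d ⬝ᵥ (P *ᵥ d)) / a with hV
  have hm : m ⬝ᵥ (P *ᵥ d) = d ⬝ᵥ (P *ᵥ d) := by
    have : m = d + t := by simp [hd]
    conv_lhs => rw [this]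
    rw [add_dotProduct, htv, add_zero]
  have hval : V = m ⬝ᵥ ((2 / a) • (P *ᵥ d)) -
      (a / 4) * (((2 / a) • (P *ᵥ d)) ⬝ᵥ (Sig *ᵥ ((2 / a) • (P *ᵥ d)))) := by
    simp only [mulVec_smul, hSP, smul_dotProduct, dotProduct_smul, smul_eq_mul, hm]
    rw [dotProduct_comm (P *ᵥ d) d, hV]
    field_simp
    ring
  have hu0 : ∀ j, 0 ≤ ((2 / a) • (P *ᵥ d)) j := fun j => by
    have := hv j
    simp only [Pi.smul_apply, smul_eq_mul]
    positivity
  have hm' : (t + (1 / a) • d - t) = (1 / a) • d := by simp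
  have hm'' : m - (t + (1 / a) • d) = (1 - 1 / a) • d := by
    rw [sub_smul, one_smul, hd]; abel
  have hprim : ((t + (1 / a) • d) - t) ⬝ᵥ (P *ᵥ ((t + (1 / a) • d) - t)) +
      (1 / (2 * μ)) * ((m - (t + (1 / a) • d)) ⬝ᵥ (P *ᵥ (m - (t + (1 / a) • d)))) = V := by
    rw [hm', hm'']
    simp only [mulVec_smul, smul_dotProduct, dotProduct_smul, smul_eq_mul, hV]
    have : a - 1 = 2 * μ := by rw [hadef]; ring
    have h1 : 1 - 1 / a = 2 * μ / a := by field_simp; exact this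
    rw [h1]
    field_simp
    rw [hadef]
    ring
  have hlow : ∀ m', V ≤ S m' + (1 / (2 * μ)) * ((m - m') ⬝ᵥ (P *ᵥ (m - m'))) := by
    intro m'
    rw [← sub_le_iff_le_add, hS]
    refine le_csInf ⟨_, 0, by simp, rfl⟩ ?_
    rintro y ⟨s, hs, rfl⟩
    rw [sub_le_iff_le_add, hval]
    exact weak m' s _ hs hu0
  have hSle : S (t + (1 / a) • d) ≤
      ((t + (1 / a) • d) - t) ⬝ᵥ (P *ᵥ ((t + (1 / a) • d) - t)) := by
    rw [hS]
    refine csInf_le ⟨0, ?_⟩ ⟨t, ht, rfl⟩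
    rintro y ⟨s, hs, rfl⟩
    exact hnn _
  have hL : IsLeast (Set.range fun m' : Fin J → ℝ =>
        S m' + (1 / (2 * μ)) * ((m - m') ⬝ᵥ (P *ᵥ (m - m')))) V := by
    refine ⟨⟨t + (1 / a) • d, le_antisymm ?_ (hlow _)⟩, ?_⟩
    · rw [← hprim]
      exact add_le_add_left hSle _
    · rintro y ⟨m', rfl⟩
      exact hlow m'
  have hG : IsGreatest {y : ℝ | ∃ u : Fin J → ℝ, (∀ j, 0 ≤ u j) ∧
          y = m ⬝ᵥ u - (a / 4) * (u ⬝ᵥ (Sig *ᵥ u))} V := by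
    refine ⟨⟨_, hu0, hval⟩, ?_⟩
    rintro y ⟨u, hu, rfl⟩
    rw [← hprim]
    exact weak _ t u ht hu
  rw [hL.csInf_eq, hG.csSup_eq]
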